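/- arXiv:2512.20386 — 2 statements merged into one kernel-verified Lean document; each statement's English description precedes it below -/
import Mathlib

section
/- Let A be a symmetric positive definite 2×2 real matrix, let v ≠ w be points of ℝ², let S = {v + t(w−v) : t ∈ [0,1]} be the closed segment from v to w, and define the anisotropic Neumann coordinate ψ(η) = −(‖w−v‖/(2π√(det A))) ∫₀¹ log √((v + t(w−v) − η)ᵀ A⁻¹ (v + t(w−v) − η)) dt for η ∈ ℝ² ∖ S. Then ψ is generalized harmonic with respect to A on ℝ² ∖ S, i.e. div(A ∇ψ)(η) = 0 for every η ∉ S. -/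
open Matrix Real MeasureTheory

/-- The divergence of a vector field on `ℝᵈ`: the trace of its Fréchet derivative. -/
noncomputable def adiv {d : ℕ} (F : EuclideanSpace ℝ (Fin d) → EuclideanSpace ℝ (Fin d))
    (x : EuclideanSpace ℝ (Fin d)) : ℝ :=
  LinearMap.trace ℝ (EuclideanSpace ℝ (Fin d)) (fderiv ℝ F x).toLinearMap

/-- The quadratic form `xᵀ M x` associated to a `d × d` matrix. -/
noncomputable def quadForm {d : ℕ} (M : Matrix (Fin d) (Fin d) ℝ)
    (x : EuclideanSpace ℝ (Fin d)) : ℝ :=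
  ∑ i, ∑ j, x i * M i j * x j

/-- Matrix-vector multiplication, acting on Euclidean space. -/
noncomputable def matVec {d : ℕ} (M : Matrix (Fin d) (Fin d) ℝ)
    (x : EuclideanSpace ℝ (Fin d)) : EuclideanSpace ℝ (Fin d) :=
  Matrix.toEuclideanLin M x

/-!
Put `Q(x) = xᵀ A⁻¹ x`. Since `∇ log √Q = A⁻¹ x / Q(x)`, the flux `A ∇ log √Q` is the radial field
`x / Q(x)`. As `Q` is homogeneous of degree two, the divergence of this field in dimension `d` is
`d / Q(x) - 2 / Q(x)`, which vanishes for `d = 2`. The coordinate is a superposition of translates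
of this kernel whose singularities stay in a compact set, so off that set `div(A ∇ ·)` may be
applied under the integral sign.
-/

open Filter Topology

section TranslatedIntegral

variable {T E F : Type*} [TopologicalSpace T] [MeasurableSpace T] [OpensMeasurableSpace T]
  {μ : Measure T} [IsFiniteMeasureOnCompacts μ] {K : Set T} {U : Set E} {γ : T → E} {η : E}

theorem exists_isCompact_subset_eventually_forall_sub_mem [AddGroup E] [TopologicalSpace E]
    [IsTopologicalAddGroup E] [LocallyCompactSpace E] {L : Set E} (hL : IsCompact L)
    (hU : IsOpen U) (hLU : ∀ y ∈ L, y - η ∈ U) :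
    ∃ C ⊆ U, IsCompact C ∧ ∀ᶠ ζ in 𝓝 η, ∀ y ∈ L, y - ζ ∈ C := by
  have hLη : IsCompact ((· - η) '' L) := hL.image (by fun_prop)
  obtain ⟨C, hC, hLC, hCU⟩ := exists_compact_between hLη hU (Set.image_subset_iff.2 hLU)
  refine ⟨C, hCU, hC, hL.eventually_forall_of_forall_eventually fun y hy => ?_⟩
  have hsub : ContinuousAt (fun p : E × E => p.2 - p.1) (η, y) := by fun_prop
  exact hsub.eventually_mem (mem_interior_iff_mem_nhds.1 (hLC (Set.mem_image_of_mem _ hy)))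

theorem integrableOn_comp_sub [Sub E] [TopologicalSpace E] [ContinuousSub E]
    [NormedAddCommGroup F] {f : E → F} (hf : ContinuousOn f U) (hK : IsCompact K)
    (hKm : MeasurableSet K) (hγ : ContinuousOn γ K) (hηU : ∀ t ∈ K, γ t - η ∈ U) :
    IntegrableOn (fun t => f (γ t - η)) K μ :=
  (hf.comp (hγ.sub continuousOn_const) hηU).integrableOn_compact' hK hKm

theorem hasFDerivAt_setIntegral_comp_sub [NormedAddCommGroup E] [NormedSpace ℝ E]
    [LocallyCompactSpace E] [NormedAddCommGroup F] [NormedSpace ℝ F] {f : E → F} (hU : IsOpen U)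
    (hf : ContDiffOn ℝ 1 f U) (hK : IsCompact K) (hKm : MeasurableSet K) (hγ : ContinuousOn γ K)
    (hηU : ∀ t ∈ K, γ t - η ∈ U) :
    HasFDerivAt (fun ζ => ∫ t in K, f (γ t - ζ) ∂μ) (-∫ t in K, fderiv ℝ f (γ t - η) ∂μ) η := by
  obtain ⟨C, hCU, hC, hnear⟩ := exists_isCompact_subset_eventually_forall_sub_mem
    (hK.image_of_continuousOn hγ) hU (Set.forall_mem_image.2 hηU)
  simp only [Set.forall_mem_image] at hnear
  have hf' : ContinuousOn (fderiv ℝ f) U := hf.continuousOn_fderiv_of_isOpen hU le_rfl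
  obtain ⟨M, hM⟩ := hC.exists_bound_of_continuousOn (hf'.mono hCU)
  have hint : IntegrableOn (fun t => fderiv ℝ f (γ t - η)) K μ :=
    integrableOn_comp_sub hf' hK hKm hγ hηU
  rw [← integral_neg]
  refine hasFDerivAt_integral_of_dominated_of_fderiv_le (bound := fun _ => M)
    (F' := fun ζ t => -fderiv ℝ f (γ t - ζ)) hnear ?_
    (integrableOn_comp_sub hf.continuousOn hK hKm hγ hηU) hint.neg.aestronglyMeasurable ?_
    (integrableOn_const hK.measure_ne_top) ?_
  · filter_upwards [hnear] with ζ hζ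
    exact (integrableOn_comp_sub hf.continuousOn hK hKm hγ
      fun t ht => hCU (hζ ht)).aestronglyMeasurable
  · filter_upwards [ae_restrict_mem hKm] with t ht ζ hζ
    simpa only [norm_neg] using hM _ (hζ ht)
  · filter_upwards [ae_restrict_mem hKm] with t ht ζ hζ
    have hft : DifferentiableAt ℝ f (γ t - ζ) :=
      (hf.contDiffAt (hU.mem_nhds (hCU (hζ ht)))).differentiableAt one_ne_zero
    simpa using! hft.hasFDerivAt.comp ζ ((hasFDerivAt_id ζ).const_sub (γ t))

end TranslatedIntegral

section Gradient

variable {T E : Type*} [TopologicalSpace T] [MeasurableSpace T] [OpensMeasurableSpace T]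
  {μ : Measure T} [IsFiniteMeasureOnCompacts μ] {K : Set T}
  [NormedAddCommGroup E] [InnerProductSpace ℝ E] [CompleteSpace E]

theorem gradient_const_mul (c : ℝ) (f : E → ℝ) (x : E) :
    gradient (fun y => c * f y) x = c • gradient f x := by
  have hfderiv : fderiv ℝ (fun y => c * f y) x = c • fderiv ℝ f x :=
    congrFun (fderiv_const_smul_field c) x
  simp only [gradient, hfderiv, map_smulₛₗ, conj_trivial]

theorem contDiffOn_gradient {m n : WithTop ℕ∞} {U : Set E} {f : E → ℝ} (hU : IsOpen U)
    (hf : ContDiffOn ℝ n f U) (hmn : m + 1 ≤ n) : ContDiffOn ℝ m (gradient f) U :=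
  (InnerProductSpace.toDual ℝ E).symm.contDiff.comp_contDiffOn (hf.fderiv_of_isOpen hU hmn)

theorem gradient_setIntegral_comp_sub [LocallyCompactSpace E] {U : Set E} {γ : T → E} {η : E}
    {f : E → ℝ} (hU : IsOpen U) (hf : ContDiffOn ℝ 1 f U) (hK : IsCompact K)
    (hKm : MeasurableSet K) (hγ : ContinuousOn γ K) (hηU : ∀ t ∈ K, γ t - η ∈ U) :
    gradient (fun ζ => ∫ t in K, f (γ t - ζ) ∂μ) η = -∫ t in K, gradient f (γ t - η) ∂μ := by
  let toDualSymm : StrongDual ℝ E →L[ℝ] E :=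
    (InnerProductSpace.toDual ℝ E).symm.toContinuousLinearEquiv.toContinuousLinearMap
  have hint : IntegrableOn (fun t => fderiv ℝ f (γ t - η)) K μ :=
    integrableOn_comp_sub (hf.continuousOn_fderiv_of_isOpen hU le_rfl) hK hKm hγ hηU
  calc gradient (fun ζ => ∫ t in K, f (γ t - ζ) ∂μ) η
      = toDualSymm (-∫ t in K, fderiv ℝ f (γ t - η) ∂μ) := by
        rw [← (hasFDerivAt_setIntegral_comp_sub hU hf hK hKm hγ hηU).fderiv]; rfl
    _ = -∫ t in K, gradient f (γ t - η) ∂μ := by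
        rw [map_neg, ← toDualSymm.integral_comp_comm hint]; rfl

end Gradient

section Divergence

variable {T : Type*} [TopologicalSpace T] [MeasurableSpace T] [OpensMeasurableSpace T]
  {μ : Measure T} [IsFiniteMeasureOnCompacts μ] {K : Set T} {d : ℕ}
  {U : Set (EuclideanSpace ℝ (Fin d))} {γ : T → EuclideanSpace ℝ (Fin d)}
  {η x : EuclideanSpace ℝ (Fin d)}

theorem adiv_congr {F G : EuclideanSpace ℝ (Fin d) → EuclideanSpace ℝ (Fin d)} (h : F =ᶠ[𝓝 x] G) :
    adiv F x = adiv G x := by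
  rw [adiv, h.fderiv_eq, adiv]

theorem adiv_const_smul (c : ℝ) (F : EuclideanSpace ℝ (Fin d) → EuclideanSpace ℝ (Fin d))
    (x : EuclideanSpace ℝ (Fin d)) :
    adiv (fun y => c • F y) x = c * adiv F x := by
  have hfderiv : fderiv ℝ (fun y => c • F y) x = c • fderiv ℝ F x :=
    congrFun (fderiv_const_smul_field c) x
  simp only [adiv, hfderiv, ContinuousLinearMap.toLinearMap_smul, map_smul, smul_eq_mul]

theorem adiv_setIntegral_comp_sub {F : EuclideanSpace ℝ (Fin d) → EuclideanSpace ℝ (Fin d)}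
    (hU : IsOpen U) (hF : ContDiffOn ℝ 1 F U) (hK : IsCompact K) (hKm : MeasurableSet K)
    (hγ : ContinuousOn γ K) (hηU : ∀ t ∈ K, γ t - η ∈ U) :
    adiv (fun ζ => ∫ t in K, F (γ t - ζ) ∂μ) η = -∫ t in K, adiv F (γ t - η) ∂μ := by
  let trace : (EuclideanSpace ℝ (Fin d) →L[ℝ] EuclideanSpace ℝ (Fin d)) →L[ℝ] ℝ :=
    (LinearMap.trace ℝ (EuclideanSpace ℝ (Fin d)) ∘ₗ
      ContinuousLinearMap.coeLM ℝ).toContinuousLinearMap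
  have hint : IntegrableOn (fun t => fderiv ℝ F (γ t - η)) K μ :=
    integrableOn_comp_sub (hF.continuousOn_fderiv_of_isOpen hU le_rfl) hK hKm hγ hηU
  calc adiv (fun ζ => ∫ t in K, F (γ t - ζ) ∂μ) η
      = trace (-∫ t in K, fderiv ℝ F (γ t - η) ∂μ) := by
        rw [← (hasFDerivAt_setIntegral_comp_sub hU hF hK hKm hγ hηU).fderiv]; rfl
    _ = -∫ t in K, adiv F (γ t - η) ∂μ := by
        rw [map_neg, ← trace.integral_comp_comm hint]; rfl

theorem matVec_eq_toEuclideanCLM (M : Matrix (Fin d) (Fin d) ℝ) (x : EuclideanSpace ℝ (Fin d)) :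
    matVec M x = toEuclideanCLM (𝕜 := ℝ) M x := rfl

theorem adiv_matVec_gradient_const_mul (A : Matrix (Fin d) (Fin d) ℝ) (c : ℝ)
    (f : EuclideanSpace ℝ (Fin d) → ℝ) (x : EuclideanSpace ℝ (Fin d)) :
    adiv (fun ζ => matVec A (gradient (fun y => c * f y) ζ)) x =
      c * adiv (fun ζ => matVec A (gradient f ζ)) x := by
  simp only [gradient_const_mul, matVec_eq_toEuclideanCLM, map_smul, adiv_const_smul]

theorem adiv_matVec_gradient_setIntegral_comp_sub (A : Matrix (Fin d) (Fin d) ℝ)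
    {f : EuclideanSpace ℝ (Fin d) → ℝ} (hU : IsOpen U) (hf : ContDiffOn ℝ 2 f U)
    (hK : IsCompact K) (hKm : MeasurableSet K) (hγ : ContinuousOn γ K)
    (hηU : ∀ t ∈ K, γ t - η ∈ U) :
    adiv (fun ζ => matVec A (gradient (fun ζ' => ∫ t in K, f (γ t - ζ') ∂μ) ζ)) η =
      ∫ t in K, adiv (fun x => matVec A (gradient f x)) (γ t - η) ∂μ := by
  have hgrad : ContDiffOn ℝ 1 (gradient f) U := contDiffOn_gradient hU hf one_add_one_eq_two.le
  have hflux : ContDiffOn ℝ 1 (fun x => matVec A (gradient f x)) U :=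
    (toEuclideanCLM (𝕜 := ℝ) A).contDiff.comp_contDiffOn hgrad
  obtain ⟨C, hCU, -, hnear⟩ := exists_isCompact_subset_eventually_forall_sub_mem
    (hK.image_of_continuousOn hγ) hU (Set.forall_mem_image.2 hηU)
  have hflux_integral : (fun ζ => matVec A (gradient (fun ζ' => ∫ t in K, f (γ t - ζ') ∂μ) ζ))
      =ᶠ[𝓝 η] fun ζ => (-1 : ℝ) • ∫ t in K, matVec A (gradient f (γ t - ζ)) ∂μ := by
    filter_upwards [hnear] with ζ hζ
    have hζU : ∀ t ∈ K, γ t - ζ ∈ U := fun t ht => hCU (hζ _ (Set.mem_image_of_mem γ ht))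
    rw [gradient_setIntegral_comp_sub hU (hf.of_le one_le_two) hK hKm hγ hζU, neg_one_smul]
    simp only [matVec_eq_toEuclideanCLM, map_neg]
    rw [ContinuousLinearMap.integral_comp_comm _
      (integrableOn_comp_sub hgrad.continuousOn hK hKm hγ hζU)]
  rw [adiv_congr hflux_integral, adiv_const_smul,
    adiv_setIntegral_comp_sub hU hflux hK hKm hγ hηU, neg_one_mul, neg_neg]

end Divergence

section LogKernel

variable {d : ℕ} {M A : Matrix (Fin d) (Fin d) ℝ} {x : EuclideanSpace ℝ (Fin d)}

theorem quadForm_eq_inner (M : Matrix (Fin d) (Fin d) ℝ) (x : EuclideanSpace ℝ (Fin d)) :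
    quadForm M x = inner ℝ x (matVec M x) := by
  simp only [quadForm, matVec_eq_toEuclideanCLM, inner_toEuclideanCLM, dotProduct, mulVec,
    Finset.mul_sum, mul_assoc]

theorem quadForm_pos (hM : M.PosDef) (hx : x ≠ 0) : 0 < quadForm M x := by
  rw [quadForm_eq_inner, matVec_eq_toEuclideanCLM, inner_toEuclideanCLM]
  exact hM.dotProduct_mulVec_pos ((WithLp.ofLp_eq_zero 2).not.2 hx)

theorem matVec_matVec_inv (hA : IsUnit A.det) (x : EuclideanSpace ℝ (Fin d)) :
    matVec A (matVec A⁻¹ x) = x := by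
  simp only [matVec_eq_toEuclideanCLM, ← mul_apply_eq_comp, ← map_mul,
    mul_nonsing_inv A hA, map_one, one_apply_eq_self]

theorem hasFDerivAt_quadForm (hM : M.IsHermitian) (x : EuclideanSpace ℝ (Fin d)) :
    HasFDerivAt (quadForm M) ((2 : ℝ) • innerSL ℝ (matVec M x)) x := by
  have hinner := (hasFDerivAt_id x).inner ℝ (toEuclideanCLM (𝕜 := ℝ) M).hasFDerivAt
  refine (hinner.congr_fderiv ?_).congr_of_eventuallyEq (.of_forall (quadForm_eq_inner M))
  ext y
  have hsymm : inner ℝ x (matVec M y) = inner ℝ (matVec M x) y :=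
    (isSymmetric_toEuclideanLin_iff.2 hM x y).symm
  simp [fderivInnerCLM_apply, ← matVec_eq_toEuclideanCLM, hsymm, real_inner_comm, two_mul]

theorem hasGradientAt_log_sqrt_quadForm (hM : M.IsHermitian) (hx : 0 < quadForm M x) :
    HasGradientAt (fun y => log √(quadForm M y)) ((quadForm M x)⁻¹ • matVec M x) x := by
  have hlog := ((hasFDerivAt_quadForm hM x).sqrt hx.ne').log (sqrt_ne_zero'.2 hx)
  refine hlog.congr_fderiv ?_
  have hcoeff : (√(quadForm M x))⁻¹ * (1 / (2 * √(quadForm M x)) * 2) = (quadForm M x)⁻¹ := by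
    field_simp
    exact (sq_sqrt hx.le).symm
  rw [smul_smul, smul_smul, mul_assoc, hcoeff, map_smulₛₗ, conj_trivial]
  rfl

theorem contDiffOn_log_sqrt_quadForm (hM : M.PosDef) {n : WithTop ℕ∞} :
    ContDiffOn ℝ n (fun x => log √(quadForm M x)) {0}ᶜ := by
  have hquad : ContDiff ℝ n (quadForm M) := by unfold quadForm; fun_prop
  exact (hquad.contDiffOn.sqrt fun x hx => (quadForm_pos hM hx).ne').log
    fun x hx => (sqrt_pos.2 (quadForm_pos hM hx)).ne'

theorem adiv_smul_self {f : EuclideanSpace ℝ (Fin d) → ℝ} {f' : EuclideanSpace ℝ (Fin d) →L[ℝ] ℝ}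
    (hf : HasFDerivAt f f' x) : adiv (fun y => f y • y) x = d * f x + f' x := by
  have hsmul : HasFDerivAt (fun y => f y • y)
      (f x • ContinuousLinearMap.id ℝ (EuclideanSpace ℝ (Fin d)) + f'.smulRight x) x :=
    hf.smul (hasFDerivAt_id x)
  have htrace : LinearMap.trace ℝ (EuclideanSpace ℝ (Fin d)) (f'.smulRight x).toLinearMap = f' x :=
    LinearMap.trace_smulRight f'.toLinearMap x
  rw [adiv, hsmul.fderiv, ContinuousLinearMap.toLinearMap_add, map_add, htrace]
  simp [mul_comm]

theorem adiv_inv_quadForm_smul_self (hM : M.IsHermitian) (hx : quadForm M x ≠ 0) :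
    adiv (fun y => (quadForm M y)⁻¹ • y) x = (d - 2) / quadForm M x := by
  have hinv := (hasDerivAt_inv hx).comp_hasFDerivAt x (hasFDerivAt_quadForm hM x)
  have heuler : inner ℝ (matVec M x) x = quadForm M x := by
    rw [quadForm_eq_inner, real_inner_comm]
  rw [adiv_smul_self (f := fun y => (quadForm M y)⁻¹) hinv]
  simp only [_root_.smul_apply, innerSL_apply_apply, heuler, smul_eq_mul]
  field_simp
  ring

theorem adiv_matVec_gradient_log_sqrt_quadForm_inv (hA : A.PosDef) (hx : x ≠ 0) :
    adiv (fun y => matVec A (gradient (fun z => log √(quadForm A⁻¹ z)) y)) x =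
      (d - 2) / quadForm A⁻¹ x := by
  have hflux : (fun y => matVec A (gradient (fun z => log √(quadForm A⁻¹ z)) y))
      =ᶠ[𝓝 x] fun y => (quadForm A⁻¹ y)⁻¹ • y := by
    filter_upwards [isOpen_ne.mem_nhds hx] with y hy
    rw [(hasGradientAt_log_sqrt_quadForm hA.inv.isHermitian (quadForm_pos hA.inv hy)).gradient,
      matVec_eq_toEuclideanCLM, map_smul, ← matVec_eq_toEuclideanCLM,
      matVec_matVec_inv hA.det_pos.ne'.isUnit]
  rw [adiv_congr hflux,
    adiv_inv_quadForm_smul_self hA.inv.isHermitian (quadForm_pos hA.inv hx).ne']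

end LogKernel

theorem anisotropic_neumann_coordinate_generalized_harmonic_general
    {T : Type*} [TopologicalSpace T] [MeasurableSpace T] [OpensMeasurableSpace T]
    (μ : Measure T) [IsFiniteMeasureOnCompacts μ] {K : Set T} (hK : IsCompact K)
    (hKm : MeasurableSet K) {γ : T → EuclideanSpace ℝ (Fin 2)} (hγ : ContinuousOn γ K)
    {A : Matrix (Fin 2) (Fin 2) ℝ} (hA : A.PosDef) (c : ℝ)
    {η : EuclideanSpace ℝ (Fin 2)} (hη : η ∉ γ '' K) :
    adiv (fun ζ => matVec A (gradient
      (fun ζ' => c * ∫ t in K, log √(quadForm A⁻¹ (γ t - ζ')) ∂μ) ζ)) η = 0 := by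
  have hne : ∀ t ∈ K, γ t - η ≠ 0 := fun t ht h => hη ⟨t, ht, sub_eq_zero.1 h⟩
  rw [adiv_matVec_gradient_const_mul, adiv_matVec_gradient_setIntegral_comp_sub A
      isOpen_compl_singleton (contDiffOn_log_sqrt_quadForm hA.inv) hK hKm hγ hne,
    setIntegral_eq_zero_of_forall_eq_zero, mul_zero]
  intro t ht
  rw [adiv_matVec_gradient_log_sqrt_quadForm_inv hA (hne t ht), Nat.cast_two, sub_self, zero_div]

/-- The anisotropic Neumann coordinate
`ψ(η) = −(‖w−v‖/(2π√(det A))) ∫₀¹ log √((v + t(w−v) − η)ᵀ A⁻¹ (v + t(w−v) − η)) dt`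
of a segment `S` from `v` to `w` is generalized harmonic with respect to `A` outside `S`:
`div(A ∇ψ)(η) = 0` for every `η ∉ S`. -/
theorem anisotropic_neumann_coordinate_generalized_harmonic
    (A : Matrix (Fin 2) (Fin 2) ℝ) (hA : A.PosDef) (hAsymm : A.IsSymm)
    (v w : EuclideanSpace ℝ (Fin 2)) (hvw : v ≠ w) :
    ∀ η : EuclideanSpace ℝ (Fin 2),
      η ∉ (fun t : ℝ => v + t • (w - v)) '' Set.Icc (0 : ℝ) 1 →
      adiv (fun ζ => matVec A (gradient
        (fun ζ' => -(‖w - v‖ / (2 * π * Real.sqrt A.det)) *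
          ∫ t in (0:ℝ)..1,
            Real.log (Real.sqrt (quadForm A⁻¹ (v + t • (w - v) - ζ')))) ζ)) η = 0 := by
  intro η hη
  simpa only [intervalIntegral.integral_of_le zero_le_one, integral_Icc_eq_integral_Ioc] using
    anisotropic_neumann_coordinate_generalized_harmonic_general volume isCompact_Icc
      measurableSet_Icc (by fun_prop) hA (-(‖w - v‖ / (2 * π * √A.det))) hη
end

section
/- Let A be a symmetric positive definite 2×2 real matrix, let v ≠ w be points of ℝ², γ(t) = v + t(w−v), n the unit vector obtained by rotating (w−v)/‖w−v‖ clockwise by 90 degrees, and η ∈ ℝ² with η ∉ {γ(t) : t ∈ [0,1]}. Set v' = A^{-1/2}v, w' = A^{-1/2}w, y = A^{-1/2}η, γ'(t) = v' + t(w'−v'), and let n' be the unit vector obtained by rotating (w'−v')/‖w'−v'‖ clockwise by 90 degrees. Then (‖w−v‖/(2π√(det A))) ∫₀¹ (1−t) · ((γ(t)−η)·n) / ((γ(t)−η)ᵀ A⁻¹ (γ(t)−η)) dt = (‖w'−v'‖/(2π)) ∫₀¹ (1−t) · ((γ'(t)−y)·n') / ‖γ'(t)−y‖² dt; that is, the anisotropic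 Dirichlet boundary integral of the hat function over the segment equals the corresponding isotropic integral over the A^{-1/2}-transformed segment. -/
open Matrix Real MeasureTheory
open scoped RealInnerProductSpace

/-- Rotation of a vector in `ℝ²` clockwise by 90 degrees: `(x₁, x₂) ↦ (x₂, −x₁)`. -/
noncomputable def rotCW (x : EuclideanSpace ℝ (Fin 2)) : EuclideanSpace ℝ (Fin 2) :=
  (EuclideanSpace.equiv (Fin 2) ℝ).symm ![x 1, -x 0]

/-!
Write `x × d = ⟪x, rotCW d⟫` for the planar cross product, and let `A = B Bᵀ` with `det B > 0`.
The length of the segment cancels the normalisation of its normal, so the numerator of the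
integrand is `(γ(t) - η) × (w - v)`, and a linear map `C` multiplies a cross product by `det C`.
For `C = B⁻¹` this factor is `1 / √(det A)`, while `Cᵀ C = A⁻¹` turns the quadratic form in the
denominator into `‖C (γ(t) - η)‖²`. Hence the two integrands agree pointwise.
-/

theorem quadForm_eq_dotProduct_mulVec {d : ℕ} (M : Matrix (Fin d) (Fin d) ℝ)
    (x : EuclideanSpace ℝ (Fin d)) : quadForm M x = x.ofLp ⬝ᵥ M *ᵥ x.ofLp := by
  simp only [quadForm, dotProduct, mulVec, Finset.mul_sum, mul_assoc]

theorem quadForm_transpose_mul_self {d : ℕ} (M : Matrix (Fin d) (Fin d) ℝ)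
    (x : EuclideanSpace ℝ (Fin d)) : quadForm (Mᵀ * M) x = ‖matVec M x‖ ^ 2 := by
  rw [quadForm_eq_dotProduct_mulVec, ← mulVec_mulVec, dotProduct_mulVec, vecMul_transpose,
    EuclideanSpace.real_norm_sq_eq]
  simp only [dotProduct, matVec, toLpLin_apply, sq]

theorem quadForm_inv_mul_transpose {d : ℕ} (B : Matrix (Fin d) (Fin d) ℝ)
    (x : EuclideanSpace ℝ (Fin d)) : quadForm (B * Bᵀ)⁻¹ x = ‖matVec B⁻¹ x‖ ^ 2 := by
  rw [Matrix.mul_inv_rev, ← transpose_nonsing_inv, quadForm_transpose_mul_self]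

theorem matVec_add_smul_sub_sub {d : ℕ} (M : Matrix (Fin d) (Fin d) ℝ)
    (v w η : EuclideanSpace ℝ (Fin d)) (t : ℝ) :
    matVec M (v + t • (w - v) - η) =
      matVec M v + t • (matVec M w - matVec M v) - matVec M η := by
  simp only [matVec, map_add, map_sub, map_smul]

theorem sqrt_det_mul_transpose {ι : Type*} [Fintype ι] [DecidableEq ι] (B : Matrix ι ι ℝ) :
    √(B * Bᵀ).det = |B.det| := by
  rw [det_mul, det_transpose, Real.sqrt_mul_self_eq_abs]

theorem rotCW_smul (c : ℝ) (x : EuclideanSpace ℝ (Fin 2)) : rotCW (c • x) = c • rotCW x := by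
  ext i
  fin_cases i <;> simp [rotCW]

theorem norm_smul_rotCW_inv_norm_smul (d : EuclideanSpace ℝ (Fin 2)) :
    ‖d‖ • rotCW (‖d‖⁻¹ • d) = rotCW d := by
  rw [← rotCW_smul]
  exact congrArg rotCW (NormedSpace.norm_smul_normalize d)

theorem inner_rotCW (x d : EuclideanSpace ℝ (Fin 2)) :
    ⟪x, rotCW d⟫ = x 0 * d 1 - x 1 * d 0 := by
  simp only [rotCW, PiLp.continuousLinearEquiv_symm_apply, PiLp.inner_apply, RCLike.inner_apply,
    ringHom_apply, Fin.sum_univ_two, cons_val_zero, cons_val_one, cons_val_fin_one]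
  ring

theorem inner_matVec_rotCW_matVec (M : Matrix (Fin 2) (Fin 2) ℝ)
    (x d : EuclideanSpace ℝ (Fin 2)) :
    ⟪matVec M x, rotCW (matVec M d)⟫ = M.det * ⟪x, rotCW d⟫ := by
  simp only [inner_rotCW, det_fin_two, matVec, toLpLin_apply, mulVec, dotProduct,
    Fin.sum_univ_two]
  ring

theorem inner_rotCW_div_quadForm_inv_mul_transpose {B : Matrix (Fin 2) (Fin 2) ℝ}
    (hB : 0 < B.det) (x d : EuclideanSpace ℝ (Fin 2)) :
    (√(B * Bᵀ).det)⁻¹ * (⟪x, rotCW d⟫ / quadForm (B * Bᵀ)⁻¹ x) =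
      ⟪matVec B⁻¹ x, rotCW (matVec B⁻¹ d)⟫ / ‖matVec B⁻¹ x‖ ^ 2 := by
  rw [sqrt_det_mul_transpose, abs_of_pos hB, quadForm_inv_mul_transpose,
    inner_matVec_rotCW_matVec, det_nonsing_inv, Ring.inverse_eq_inv', mul_div_assoc]

/-- Besides the symmetric square root of `A`, the factor `B` can for instance be a Cholesky factor.
The equation for `‖w - v‖ • n` says that `n` is the unit normal without dividing by `‖w - v‖`. -/
theorem anisotropic_dirichlet_integral_transform_2d_general
    (A B : Matrix (Fin 2) (Fin 2) ℝ) (hB : 0 < B.det) (hBA : B * Bᵀ = A)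
    (v w n η : EuclideanSpace ℝ (Fin 2)) (hn : ‖w - v‖ • n = rotCW (w - v))
    (v' w' y n' : EuclideanSpace ℝ (Fin 2))
    (hv' : v' = matVec B⁻¹ v) (hw' : w' = matVec B⁻¹ w) (hy : y = matVec B⁻¹ η)
    (hn' : ‖w' - v'‖ • n' = rotCW (w' - v')) :
    (‖w - v‖ / (2 * π * Real.sqrt A.det)) *
      ∫ t in (0:ℝ)..1,
        (1 - t) * ⟪v + t • (w - v) - η, n⟫ / quadForm A⁻¹ (v + t • (w - v) - η) =
    (‖w' - v'‖ / (2 * π)) *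
      ∫ t in (0:ℝ)..1,
        (1 - t) * ⟪v' + t • (w' - v') - y, n'⟫ / ‖v' + t • (w' - v') - y‖ ^ 2 := by
  have hdir : matVec B⁻¹ (w - v) = w' - v' := by simp only [hv', hw', matVec, map_sub]
  rw [← intervalIntegral.integral_const_mul, ← intervalIntegral.integral_const_mul]
  congr 1 with t
  have hpoint : matVec B⁻¹ (v + t • (w - v) - η) = v' + t • (w' - v') - y := by
    rw [hv', hw', hy, matVec_add_smul_sub_sub]
  have hkernel := inner_rotCW_div_quadForm_inv_mul_transpose hB (v + t • (w - v) - η) (w - v)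
  rw [hBA, hdir, hpoint, ← hn, ← hn', real_inner_smul_right, real_inner_smul_right] at hkernel
  linear_combination (1 - t) / (2 * π) * hkernel

/-- Let `A` be symmetric positive definite with symmetric positive definite
square root `B = A^{1/2}`. For a segment `γ(t) = v + t(w−v)` with unit normal `n` and `η` off
the closed segment, setting `v' = A^{-1/2}v`, `w' = A^{-1/2}w`, `y = A^{-1/2}η`,
`γ'(t) = v' + t(w'−v')` with unit normal `n'`, the anisotropic Dirichlet boundary integral of
the hat function over the segment equals the corresponding isotropic integral over the
`A^{-1/2}`-transformed segment:
`(‖w−v‖/(2π√det A)) ∫₀¹ (1−t)((γ(t)−η)·n)/((γ(t)−η)ᵀA⁻¹(γ(t)−η)) dt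
  = (‖w'−v'‖/(2π)) ∫₀¹ (1−t)((γ'(t)−y)·n')/‖γ'(t)−y‖² dt`. -/
theorem anisotropic_dirichlet_integral_transform_2d
    (A B : Matrix (Fin 2) (Fin 2) ℝ)
    (hA : A.PosDef) (hAsymm : A.IsSymm)
    (hB : B.PosDef) (hBsymm : B.IsSymm) (hBA : B * B = A)
    (v w : EuclideanSpace ℝ (Fin 2)) (hvw : v ≠ w)
    (n : EuclideanSpace ℝ (Fin 2)) (hn : n = rotCW (‖w - v‖⁻¹ • (w - v)))
    (η : EuclideanSpace ℝ (Fin 2))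
    (hη : η ∉ (fun t : ℝ => v + t • (w - v)) '' Set.Icc (0 : ℝ) 1)
    (v' w' y : EuclideanSpace ℝ (Fin 2))
    (hv' : v' = matVec B⁻¹ v) (hw' : w' = matVec B⁻¹ w) (hy : y = matVec B⁻¹ η)
    (n' : EuclideanSpace ℝ (Fin 2)) (hn' : n' = rotCW (‖w' - v'‖⁻¹ • (w' - v'))) :
    (‖w - v‖ / (2 * π * Real.sqrt A.det)) *
      ∫ t in (0:ℝ)..1,
        (1 - t) * ⟪v + t • (w - v) - η, n⟫ / quadForm A⁻¹ (v + t • (w - v) - η) =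
    (‖w' - v'‖ / (2 * π)) *
      ∫ t in (0:ℝ)..1,
        (1 - t) * ⟪v' + t • (w' - v') - y, n'⟫ / ‖v' + t • (w' - v') - y‖ ^ 2 := by
  exact anisotropic_dirichlet_integral_transform_2d_general A B hB.det_pos (by rwa [hBsymm.eq])
    v w n η (hn ▸ norm_smul_rotCW_inv_norm_smul _) v' w' y n' hv' hw' hy
    (hn' ▸ norm_smul_rotCW_inv_norm_smul _)
end
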